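/- Suppose φ : ℝ → ℝ is even, continuous, integrable, φ(0) = 1, and its Fourier transform φ̂ is nonnegative, integrable, and real-analytic on ℝ. Then for every λ > 0 and every ω ∈ ℝ, the Fourier transform of P_∞(λ, ·) satisfies P̂_∞(λ, ω) = 2 φ̂(ω) (H(λω) - F(λ)), where F(λ) := Σ_{k=0}^∞ a_k φ(λk). -/

import Mathlib

open MeasureTheory Real

/-- Fourier transform normalized as `f̂(ω) = (1/√(2π)) ∫ f(x) e^{-iωx} dx`. -/
noncomputable def FT (f : ℝ → ℝ) (w : ℝ) : ℂ :=
  (1 / Real.sqrt (2 * Real.pi)) * ∫ x : ℝ, (f x : ℂ) * Complex.exp (-(Complex.I * w * x))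

/-- The even, `2π`-periodic auxiliary function with `H(x) = 1` for `|x| ≤ π/2`
and `H(x) = sin²x` for `π/2 < |x| ≤ π`.  (Note that on `(-π, π]` one has
`cos x ≥ 0` exactly when `|x| ≤ π/2`, so this closed form gives the
even `2π`-periodic extension.) -/
noncomputable def H (x : ℝ) : ℝ := if 0 ≤ Real.cos x then 1 else Real.sin x ^ 2

/-- The Fourier cosine coefficients of `H`. -/
noncomputable def a : ℕ → ℝ
  | 0 => 3 / 4
  | 1 => 4 / (3 * Real.pi)
  | 2 => -(1 / 4)
  | k => -4 * Real.sin (k * Real.pi / 2) / (Real.pi * k * (k ^ 2 - 4))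

/-- `A_∞(λ) = -Σ_{k=1}^∞ a_k φ(λk)`. -/
noncomputable def Ainf (φ : ℝ → ℝ) (lam : ℝ) : ℝ :=
  -∑' k : ℕ, a (k + 1) * φ (lam * (k + 1))

/-- `P_∞(λ, x) = 2 A_∞(λ) φ(x) + Σ_{k=1}^∞ a_k (φ(x + λk) + φ(x - λk))`. -/
noncomputable def Pinf (φ : ℝ → ℝ) (lam x : ℝ) : ℝ :=
  2 * Ainf φ lam * φ x +
    ∑' k : ℕ, a (k + 1) * (φ (x + lam * (k + 1)) + φ (x - lam * (k + 1)))

/-- `F(λ) = Σ_{k=0}^∞ a_k φ(λk)`. -/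
noncomputable def F (φ : ℝ → ℝ) (lam : ℝ) : ℝ := ∑' k : ℕ, a k * φ (lam * k)

/-!
Adding the translates of `φ` by `±λk` multiplies its transform by `2 cos (λkω)`, so the series in
`P_∞` has transform `2 φ̂(ω) ∑_{k ≥ 1} a_k cos (kλω)`. Since `H` is continuous with summable
coefficients, its cosine series converges to it everywhere and that sum is `H(λω) - a_0`; as
`φ(0) = 1`, the term `2 A_∞(λ) φ` corrects `a_0` to `F(λ)`. The coefficients of `H` come from
`H = 1 - min(cos, 0)²`. Since `φ̂` is integrable, `φ` is bounded, so the series `F(λ)` converges.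
-/

section CosineSeries

/-- The cosine coefficient `(2/π) ∫₀^π f(x) cos(kx) dx`. At `k = 0` this is twice the mean value of
`f`, so the constant term of the cosine series is `cosCoeff f 0 / 2`. -/
noncomputable def cosCoeff (f : ℝ → ℝ) (k : ℕ) : ℝ := 2 / π * ∫ x in 0..π, f x * cos (k * x)

lemma intervalIntegral_neg_self {E : Type*} [NormedAddCommGroup E] [NormedSpace ℝ E]
    {f : ℝ → E} (hf : Continuous f) (c : ℝ) :
    ∫ x in -c..c, f x = ∫ x in 0..c, (f x + f (-x)) := by
  have hneg : Continuous fun x => f (-x) := hf.comp continuous_neg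
  rw [intervalIntegral.integral_add (hf.intervalIntegrable _ _) (hneg.intervalIntegrable _ _),
    intervalIntegral.integral_comp_neg, neg_zero, add_comm,
    intervalIntegral.integral_add_adjacent_intervals (hf.intervalIntegrable _ _)
      (hf.intervalIntegrable _ _)]

lemma cexp_add_cexp_neg (y : ℝ) :
    Complex.exp (y * Complex.I) + Complex.exp (-(y * Complex.I)) = ((2 * cos y : ℝ) : ℂ) := by
  push_cast
  rw [Complex.two_cos, neg_mul]

local instance factTwoPiPos : Fact (0 < 2 * π) := ⟨Real.two_pi_pos⟩

lemma fourier_two_pi_apply (n : ℤ) (x : ℝ) :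
    fourier n (x : AddCircle (2 * π)) = Complex.exp ((n * x : ℝ) * Complex.I) := by
  have hπ : (π : ℂ) ≠ 0 := Complex.ofReal_ne_zero.mpr pi_ne_zero
  rw [fourier_coe_apply]
  congr 1
  push_cast
  field_simp

variable {f : ℝ → ℝ}

lemma fourierCoeff_eq_cosCoeff_natAbs (hcont : Continuous f) (heven : f.Even)
    {g : AddCircle (2 * π) → ℂ} (hg : ∀ x : ℝ, g x = f x) (n : ℤ) :
    fourierCoeff g n = ((cosCoeff f n.natAbs / 2 : ℝ) : ℂ) := by
  have hcos (x : ℝ) : cos (n.natAbs * x) = cos (n * x) := by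
    rw [Nat.cast_natAbs, Int.cast_abs]
    rcases abs_choice (n : ℝ) with h | h <;> simp [h]
  have hpair (x : ℝ) :
      Complex.exp ((-n * x : ℝ) * Complex.I) * f x +
        Complex.exp ((-n * -x : ℝ) * Complex.I) * f (-x) =
      ((2 * (f x * cos (n.natAbs * x)) : ℝ) : ℂ) := by
    rw [heven x, hcos, mul_left_comm, Complex.ofReal_mul (f x), ← cexp_add_cexp_neg]
    push_cast
    ring_nf
  rw [fourierCoeff_eq_intervalIntegral g n (-π), show -π + 2 * π = π by ring]
  simp only [fourier_two_pi_apply, hg, smul_eq_mul, Int.cast_neg]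
  rw [intervalIntegral_neg_self (by fun_prop)]
  simp only [hpair]
  rw [intervalIntegral.integral_ofReal, intervalIntegral.integral_const_mul, cosCoeff,
    Complex.real_smul]
  push_cast
  ring

theorem hasSum_cosCoeff_mul_cos (hcont : Continuous f) (hper : f.Periodic (2 * π))
    (heven : f.Even) (hsum : Summable (cosCoeff f)) (x : ℝ) :
    HasSum (fun k : ℕ => cosCoeff f (k + 1) * cos ((k + 1 : ℕ) * x))
      (f x - cosCoeff f 0 / 2) := by
  have hperC : Function.Periodic (fun x => (f x : ℂ)) (2 * π) := fun x => by simp only [hper x]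
  let g : C(AddCircle (2 * π), ℂ) :=
    ⟨hperC.lift, continuous_coinduced_dom.mpr (Complex.continuous_ofReal.comp hcont)⟩
  have hg (x : ℝ) : g x = f x := rfl
  have hcoeff : fourierCoeff g = fun n => ((cosCoeff f n.natAbs / 2 : ℝ) : ℂ) :=
    funext (fourierCoeff_eq_cosCoeff_natAbs hcont heven hg)
  have hsumg : Summable (fourierCoeff g) := by
    have hnat := Complex.summable_ofReal.mpr (hsum.div_const 2)
    rw [hcoeff]
    exact .of_nat_of_neg (by simpa using hnat) (by simpa using hnat)
  have hterm (k : ℕ) : ((cosCoeff f k * cos (k * x) : ℝ) : ℂ) =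
      fourierCoeff g k • fourier k (x : AddCircle (2 * π)) +
        fourierCoeff g (-k) • fourier (-k) (x : AddCircle (2 * π)) := by
    have hcos := cexp_add_cexp_neg (k * x)
    simp only [hcoeff, fourier_two_pi_apply, smul_eq_mul, Int.natAbs_neg, Int.natAbs_natCast]
    push_cast at hcos ⊢
    rw [neg_mul, neg_mul]
    linear_combination (-(cosCoeff f k : ℂ) / 2) * hcos
  have hfull : HasSum (fun k : ℕ => cosCoeff f k * cos (k * x)) (f x + cosCoeff f 0 / 2) := by
    rw [← Complex.hasSum_ofReal]
    convert (has_pointwise_sum_fourier_series_of_summable hsumg x).nat_add_neg using 1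
    · exact funext hterm
    · simp [hg, hcoeff]
  have htail := (hasSum_nat_add_iff' 1).mpr hfull
  rwa [Finset.sum_range_one, Nat.cast_zero, zero_mul, cos_zero, mul_one, add_sub_assoc, half_sub,
    ← sub_eq_add_neg] at htail

end CosineSeries

section CoefficientsOfH

lemma H_eq_one_sub_min_sq (x : ℝ) : H x = 1 - min (cos x) 0 ^ 2 := by
  unfold H
  split_ifs with h
  · simp [h]
  · rw [min_eq_left (not_le.mp h).le, sin_sq]

lemma continuous_H : Continuous H := by
  rw [funext H_eq_one_sub_min_sq]
  fun_prop

lemma H_periodic : H.Periodic (2 * π) := fun x => by simp [H]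

lemma H_even : H.Even := fun x => by simp [H]

lemma integral_cos_sq_mul_cos_mul {t : ℝ} (ht : t ≠ 0) :
    (4 - t ^ 2) * ∫ x in 0..π / 2, cos x ^ 2 * cos (t * x) = 2 * sin (t * π / 2) / t := by
  have hrec := EulerSine.integral_cos_mul_cos_pow (z := t / 2) le_rfl (by simpa using ht)
  have hcos : ∫ x in 0..π / 2, cos (t * x) = sin (t * π / 2) / t := by
    rw [intervalIntegral.integral_comp_mul_left _ ht, integral_cos]
    rw [mul_zero, sin_zero, sub_zero, smul_eq_mul, ← mul_div_assoc, inv_mul_eq_div]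
  have hmul (x : ℝ) : (2 * (t / 2) * x : ℂ) = (t * x : ℝ) := by push_cast; ring
  simp only [hmul, ← Complex.ofReal_cos, ← Complex.ofReal_pow, ← Complex.ofReal_mul,
    intervalIntegral.integral_ofReal, Nat.sub_self, pow_zero, mul_one, hcos] at hrec
  norm_cast at hrec
  simp only [mul_comm (cos _ ^ 2)]
  push_cast at hrec
  linear_combination 4 * hrec

lemma integral_cos_sq_mul_cos_two_mul :
    ∫ x in 0..π / 2, cos x ^ 2 * cos (2 * x) = π / 8 := by
  have hint (n : ℕ) : IntervalIntegrable (fun x => cos x ^ n) volume 0 (π / 2) :=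
    (by fun_prop : Continuous fun x => cos x ^ n).intervalIntegrable _ _
  have hexp (x : ℝ) : cos x ^ 2 * cos (2 * x) = 2 * cos x ^ 4 - cos x ^ 2 := by
    rw [cos_two_mul]; ring
  simp only [hexp]
  rw [intervalIntegral.integral_sub ((hint 4).const_mul 2) (hint 2),
    intervalIntegral.integral_const_mul, integral_cos_pow, integral_cos_sq]
  simp only [cos_pi_div_two, sin_pi_div_two, cos_zero, sin_zero]
  push_cast
  ring

-- The defect `1 - H` lives on `[π/2, π]`; the reflection `x ↦ π - x` carries it to `cos²` on
-- `[0, π/2]` at the cost of the sign `(-1) ^ k`.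
lemma integral_H_mul_cos (k : ℕ) :
    ∫ x in 0..π, H x * cos (k * x) =
      (∫ x in 0..π, cos (k * x)) - (-1) ^ k * ∫ x in 0..π / 2, cos x ^ 2 * cos (k * x) := by
  have hH := continuous_H
  have hcos : Continuous fun x => cos (k * x) := by fun_prop
  have hdefect : Continuous fun x => (1 - H x) * cos (k * x) := by fun_prop
  have hleft : ∫ x in 0..π / 2, (1 - H x) * cos (k * x) = 0 := by
    refine intervalIntegral.integral_zero_ae (.of_forall fun x hx => ?_)
    rw [Set.uIoc_of_le (by positivity)] at hx
    simp [H_eq_one_sub_min_sq, cos_nonneg_of_mem_Icc ⟨by linarith [hx.1, pi_pos], hx.2⟩]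
  have hright : ∫ x in π / 2..π, (1 - H x) * cos (k * x) =
      (-1) ^ k * ∫ x in 0..π / 2, cos x ^ 2 * cos (k * x) := by
    have hreflect := intervalIntegral.integral_comp_sub_left (a := 0) (b := π / 2)
      (fun x => (1 - H x) * cos (k * x)) π
    rw [sub_zero, sub_half] at hreflect
    rw [← hreflect, ← intervalIntegral.integral_const_mul]
    refine intervalIntegral.integral_congr fun x hx => ?_
    rw [Set.uIcc_of_le (by positivity)] at hx
    have hx' : 0 ≤ cos x := cos_nonneg_of_mem_Icc ⟨by linarith [hx.1, pi_pos], hx.2⟩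
    simp only [H_eq_one_sub_min_sq, cos_pi_sub, mul_sub, cos_nat_mul_pi_sub]
    rw [min_eq_left (neg_nonpos.mpr hx')]
    ring
  have hsplit := intervalIntegral.integral_add_adjacent_intervals (μ := volume)
    (hdefect.intervalIntegrable 0 (π / 2)) (hdefect.intervalIntegrable (π / 2) π)
  rw [hleft, hright, zero_add] at hsplit
  rw [hsplit, ← intervalIntegral.integral_sub (hcos.intervalIntegrable _ _)
    (hdefect.intervalIntegrable _ _)]
  exact intervalIntegral.integral_congr fun x _ => by ring

lemma a_eq_div {k : ℕ} (h0 : k ≠ 0) (h2 : k ≠ 2) :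
    a k = -4 * sin (k * π / 2) / (π * k * (k ^ 2 - 4)) := by
  match k with
  | 1 =>
    simp only [a, Nat.cast_one, one_mul, sin_pi_div_two, mul_one, one_pow]
    rw [div_eq_div_iff (by positivity) (by linarith [pi_pos])]
    ring
  | k + 3 => rfl

lemma cosCoeff_H_zero : cosCoeff H 0 = 2 * a 0 := by
  have hπ := pi_ne_zero
  rw [cosCoeff, integral_H_mul_cos]
  simp only [Nat.cast_zero, zero_mul, cos_zero, sin_zero, cos_pi_div_two, mul_one, pow_zero,
    one_mul, intervalIntegral.integral_const, integral_cos_sq, smul_eq_mul, a]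
  field_simp
  ring

lemma cosCoeff_H_eq_neg {k : ℕ} (hk : k ≠ 0) :
    cosCoeff H k = -(2 / π * ((-1) ^ k * ∫ x in 0..π / 2, cos x ^ 2 * cos (k * x))) := by
  have hk' : (k : ℝ) ≠ 0 := Nat.cast_ne_zero.mpr hk
  have hzero : ∫ x in 0..π, cos (k * x) = 0 := by
    rw [intervalIntegral.integral_comp_mul_left _ hk', integral_cos]
    simp
  rw [cosCoeff, integral_H_mul_cos, hzero, zero_sub, mul_neg]

lemma cosCoeff_H {k : ℕ} (hk : k ≠ 0) : cosCoeff H k = a k := by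
  have hπ := pi_ne_zero
  rw [cosCoeff_H_eq_neg hk]
  rcases eq_or_ne k 2 with rfl | h2
  · rw [Nat.cast_two, integral_cos_sq_mul_cos_two_mul, a]
    field_simp
    norm_num
  have hk' : (k : ℝ) ≠ 0 := Nat.cast_ne_zero.mpr hk
  have hk2 : (4 - k ^ 2 : ℝ) ≠ 0 := sub_ne_zero.mpr <| mod_cast fun h : 4 = k ^ 2 =>
    h2 (Nat.pow_left_injective two_ne_zero h.symm)
  have hk2' : (k ^ 2 - 4 : ℝ) ≠ 0 := by rwa [← neg_sub, neg_ne_zero]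
  have hsin : sin (k * π / 2) = -((-1) ^ k * sin (k * π / 2)) := by
    rw [← sin_nat_mul_pi_sub, sub_half]
  have hint := eq_div_of_mul_eq hk2 ((mul_comm _ _).trans (integral_cos_sq_mul_cos_mul hk'))
  rw [a_eq_div hk h2, hint]
  calc -(2 / π * ((-1) ^ k * (2 * sin (k * π / 2) / k / (4 - k ^ 2))))
      = 4 * -((-1) ^ k * sin (k * π / 2)) / (π * k * (4 - k ^ 2)) := by
        field_simp
        ring
    _ = -4 * sin (k * π / 2) / (π * k * (k ^ 2 - 4)) := by
        rw [← hsin, div_eq_div_iff (by positivity) (by positivity)]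
        ring

lemma summable_abs_a : Summable fun k => |a k| := by
  have hsq : Summable fun k : ℕ => 4 * (1 / ((k + 3 : ℕ) : ℝ) ^ 2) :=
    ((summable_nat_add_iff 3).mpr (summable_one_div_nat_pow.mpr one_lt_two)).mul_left 4
  rw [← summable_nat_add_iff 3]
  refine hsq.of_nonneg_of_le (fun _ => abs_nonneg _) fun k => ?_
  rw [a_eq_div (by omega) (by omega)]
  have hx : (3 : ℝ) ≤ (k + 3 : ℕ) := mod_cast Nat.le_add_left 3 k
  generalize ((k + 3 : ℕ) : ℝ) = x at hx ⊢
  have hden : x ^ 2 ≤ π * x * (x ^ 2 - 4) := by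
    have : 1 ≤ π := by linarith [pi_gt_three]
    calc x ^ 2 = 1 * x * x := by ring
      _ ≤ π * x * (x ^ 2 - 4) := by gcongr; nlinarith
  have hsin : |-4 * sin (x * π / 2)| ≤ 4 := by
    rw [abs_mul, abs_neg, abs_of_pos four_pos]
    linarith [abs_sin_le_one (x * π / 2)]
  rw [abs_div, abs_of_pos ((by positivity : 0 < x ^ 2).trans_le hden), mul_one_div]
  gcongr

theorem hasSum_a_mul_cos (x : ℝ) : HasSum (fun k : ℕ => a k * cos (k * x)) (H x) := by
  have hsum : Summable (cosCoeff H) := by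
    rw [← summable_nat_add_iff 1]
    simpa only [cosCoeff_H (Nat.succ_ne_zero _)] using
      (summable_nat_add_iff 1).mpr summable_abs_a.of_abs
  have hH := hasSum_cosCoeff_mul_cos continuous_H H_periodic H_even hsum x
  simp only [cosCoeff_H (Nat.succ_ne_zero _), cosCoeff_H_zero] at hH
  rw [← hasSum_nat_add_iff' 1]
  simpa using hH

end CoefficientsOfH

lemma summable_mul_of_abs_le {ι : Type*} {c u : ι → ℝ} {C : ℝ} (hc : Summable fun i => |c i|)
    (hu : ∀ i, |u i| ≤ C) : Summable fun i => c i * u i := by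
  refine .of_norm_bounded (hc.mul_right C) fun i => ?_
  rw [norm_mul, norm_eq_abs, norm_eq_abs]
  gcongr
  exact hu i

section FourierTransform

lemma integrable_tsum_of_summable_integral_norm {α ι E : Type*} [MeasurableSpace α]
    {μ : Measure α} [Countable ι] [NormedAddCommGroup E] [CompleteSpace E] {f : ι → α → E}
    (hf : ∀ i, Integrable (f i) μ) (hsum : Summable fun i => ∫ x, ‖f i x‖ ∂μ) :
    Integrable (fun x => ∑' i, f i x) μ := by
  let g (i : ι) : α →₁[μ] E := (hf i).toL1 (f i)
  have hnorm (i : ι) : ‖g i‖ = ∫ x, ‖f i x‖ ∂μ := L1.norm_of_fun_eq_integral_norm (hf i)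
  have hg : ∑' i, ‖g i‖ₑ ≠ ⊤ :=
    tsum_enorm_ne_top_iff_summable_norm.mpr (hsum.congr fun i => (hnorm i).symm)
  have hcoe : ∀ᵐ x ∂μ, ∀ i, g i x = f i x := ae_all_iff.mpr fun i => (hf i).coeFn_toL1
  refine (L1.integrable_coeFn (∑' i, g i)).congr ?_
  filter_upwards [Lp.coeFn_tsum hg, hcoe] with x hx hxi
  rw [hx]
  exact tsum_congr hxi

variable {f g : ℝ → ℝ}

lemma norm_fourierKernel (w x : ℝ) : ‖Complex.exp (-(Complex.I * w * x))‖ = 1 := by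
  simp [Complex.norm_exp]

lemma integrable_mul_fourierKernel (hf : Integrable f) (w : ℝ) :
    Integrable fun x : ℝ => (f x : ℂ) * Complex.exp (-(Complex.I * w * x)) :=
  hf.ofReal.mul_bdd (c := 1) (by fun_prop) (.of_forall fun x => (norm_fourierKernel w x).le)

lemma FT_add (hf : Integrable f) (hg : Integrable g) (w : ℝ) :
    FT (fun x => f x + g x) w = FT f w + FT g w := by
  simp only [FT, Complex.ofReal_add, add_mul]
  rw [integral_add (integrable_mul_fourierKernel hf w) (integrable_mul_fourierKernel hg w), mul_add]

lemma FT_const_mul (c : ℝ) (f : ℝ → ℝ) (w : ℝ) : FT (fun x => c * f x) w = c * FT f w := by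
  simp only [FT, Complex.ofReal_mul, mul_assoc, integral_const_mul]
  ring

lemma FT_comp_add_right (f : ℝ → ℝ) (t w : ℝ) :
    FT (fun x => f (x + t)) w = Complex.exp ((t * w : ℝ) * Complex.I) * FT f w := by
  have hshift := integral_add_right_eq_self (μ := volume) (fun x : ℝ =>
    Complex.exp ((t * w : ℝ) * Complex.I) * ((f x : ℂ) * Complex.exp (-(Complex.I * w * x)))) t
  have hkernel (x : ℝ) : Complex.exp (-(Complex.I * w * x)) =
      Complex.exp ((t * w : ℝ) * Complex.I) * Complex.exp (-(Complex.I * w * (x + t : ℝ))) := by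
    rw [← Complex.exp_add]
    congr 1
    push_cast
    ring
  rw [FT, FT, mul_left_comm, ← integral_const_mul (Complex.exp _), ← hshift]
  congr 2 with x
  rw [hkernel, mul_left_comm]

lemma hasSum_FT {ι : Type*} [Countable ι] {f : ι → ℝ → ℝ} (hf : ∀ i, Integrable (f i))
    (hsum : Summable fun i => ∫ x, ‖f i x‖) (w : ℝ) :
    HasSum (fun i => FT (f i) w) (FT (fun x => ∑' i, f i x) w) := by
  simp only [FT, Complex.ofReal_tsum, ← tsum_mul_right]
  refine (hasSum_integral_of_summable_integral_norm
    (fun i => integrable_mul_fourierKernel (hf i) w) ?_).mul_left _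
  simpa only [norm_mul, norm_fourierKernel, mul_one, Complex.norm_real] using hsum

open FourierTransform in
lemma fourier_ofReal_eq_FT (f : ℝ → ℝ) (v : ℝ) :
    𝓕 (fun x => (f x : ℂ)) v = √(2 * π) * FT f (2 * π * v) := by
  have hsqrt : (√(2 * π) : ℂ) ≠ 0 := by
    exact_mod_cast (sqrt_pos.mpr two_pi_pos).ne'
  rw [FT, ← mul_assoc, mul_one_div_cancel hsqrt, one_mul, fourier_real_eq_integral_exp_smul]
  congr 1 with x
  rw [smul_eq_mul, mul_comm]
  push_cast
  ring_nf

open FourierTransform in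
lemma exists_abs_le_of_integrable_FT (hcont : Continuous f) (hf : Integrable f)
    (hFT : Integrable (FT f)) : ∃ C, ∀ x, |f x| ≤ C := by
  have hFf : Integrable (𝓕 fun x => (f x : ℂ)) := by
    rw [funext (fourier_ofReal_eq_FT f)]
    exact (hFT.comp_mul_left' two_pi_pos.ne').const_mul _
  have hinv : 𝓕⁻ (𝓕 fun x => (f x : ℂ)) = fun x => (f x : ℂ) :=
    (Complex.continuous_ofReal.comp hcont).fourierInv_fourier_eq hf.ofReal hFf
  refine ⟨∫ v, ‖𝓕 (fun x => (f x : ℂ)) v‖, fun x => ?_⟩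
  calc |f x| = ‖𝓕⁻ (𝓕 fun x => (f x : ℂ)) x‖ := by rw [hinv]; simp
    _ ≤ ∫ v, ‖𝓕 (fun x => (f x : ℂ)) v‖ :=
      VectorFourier.norm_fourierIntegral_le_integral_norm _ _ _ _ _

/-- The symmetrised translate `f(· + t) + f(· - t)`: the tail of `P_∞` is a series of these. -/
def symmTranslate (f : ℝ → ℝ) (t x : ℝ) : ℝ := f (x + t) + f (x - t)

lemma integrable_symmTranslate (hf : Integrable f) (t : ℝ) : Integrable (symmTranslate f t) :=
  (hf.comp_add_right t).add (hf.comp_sub_right t)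

lemma integral_norm_symmTranslate_le (hf : Integrable f) (t : ℝ) :
    ∫ x, ‖symmTranslate f t x‖ ≤ 2 * ∫ x, ‖f x‖ := by
  have hadd := (hf.comp_add_right t).norm
  have hsub := (hf.comp_sub_right t).norm
  calc ∫ x, ‖symmTranslate f t x‖ ≤ ∫ x, (‖f (x + t)‖ + ‖f (x - t)‖) :=
        integral_mono (integrable_symmTranslate hf t).norm (hadd.add hsub)
          fun x => norm_add_le _ _
    _ = 2 * ∫ x, ‖f x‖ := by
        rw [integral_add hadd hsub, integral_add_right_eq_self (fun x => ‖f x‖),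
          integral_sub_right_eq_self (fun x => ‖f x‖), two_mul]

lemma FT_symmTranslate (hf : Integrable f) (t w : ℝ) :
    FT (symmTranslate f t) w = ((2 * cos (t * w) : ℝ) : ℂ) * FT f w := by
  have hsub : FT (fun x => f (x - t)) w = Complex.exp (-((t * w : ℝ) * Complex.I)) * FT f w := by
    simpa [sub_eq_add_neg] using FT_comp_add_right f (-t) w
  unfold symmTranslate
  rw [FT_add (hf.comp_add_right t) (hf.comp_sub_right t), FT_comp_add_right, hsub, ← add_mul,
    cexp_add_cexp_neg]

section Series

variable {ι : Type*} {c : ι → ℝ}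

lemma summable_integral_norm_mul_symmTranslate (hf : Integrable f)
    (hc : Summable fun i => |c i|) (t : ι → ℝ) :
    Summable fun i => ∫ x, ‖c i * symmTranslate f (t i) x‖ := by
  refine (hc.mul_right (2 * ∫ x, ‖f x‖)).of_nonneg_of_le
    (fun i => integral_nonneg fun x => norm_nonneg _) fun i => ?_
  simp only [norm_mul, integral_const_mul, norm_eq_abs (c i)]
  gcongr
  exact integral_norm_symmTranslate_le hf (t i)

variable [Countable ι]

lemma integrable_tsum_mul_symmTranslate (hf : Integrable f)
    (hc : Summable fun i => |c i|) (t : ι → ℝ) :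
    Integrable fun x => ∑' i, c i * symmTranslate f (t i) x :=
  integrable_tsum_of_summable_integral_norm
    (fun i => (integrable_symmTranslate hf (t i)).const_mul (c i))
    (summable_integral_norm_mul_symmTranslate hf hc t)

lemma FT_tsum_mul_symmTranslate (hf : Integrable f)
    (hc : Summable fun i => |c i|) (t : ι → ℝ) (w : ℝ) :
    FT (fun x => ∑' i, c i * symmTranslate f (t i) x) w =
      2 * FT f w * ((∑' i, c i * cos (t i * w) : ℝ) : ℂ) := by
  rw [← (hasSum_FT (fun i => (integrable_symmTranslate hf (t i)).const_mul (c i))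
    (summable_integral_norm_mul_symmTranslate hf hc t) w).tsum_eq, Complex.ofReal_tsum,
    ← tsum_mul_left]
  refine tsum_congr fun i => ?_
  rw [FT_const_mul, FT_symmTranslate hf]
  push_cast
  ring

end Series

end FourierTransform

section Pinf

variable {φ : ℝ → ℝ}

-- The series in `Pinf` is only known to converge for almost every `x`, which is enough here.
theorem FT_Pinf (hint : Integrable φ) (lam w : ℝ) :
    FT (Pinf φ lam) w = 2 * FT φ w * ((Ainf φ lam + (H (lam * w) - a 0) : ℝ) : ℂ) := by
  have ha : Summable fun k => |a (k + 1)| :=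
    (summable_nat_add_iff (f := fun k => |a k|) 1).mpr summable_abs_a
  have hPinf : Pinf φ lam = fun x => 2 * Ainf φ lam * φ x +
      ∑' k : ℕ, a (k + 1) * symmTranslate φ (lam * (k + 1)) x := rfl
  have hH : ∑' k : ℕ, a (k + 1) * cos (lam * (k + 1) * w) = H (lam * w) - a 0 := by
    have htail := (hasSum_nat_add_iff' 1).mpr (hasSum_a_mul_cos (lam * w))
    simpa [mul_left_comm, mul_assoc] using htail.tsum_eq
  rw [hPinf, FT_add (hint.const_mul _) (integrable_tsum_mul_symmTranslate hint ha _),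
    FT_const_mul, FT_tsum_mul_symmTranslate hint ha, hH]
  push_cast
  ring

lemma F_eq_sub_Ainf {lam : ℝ} (hφ0 : φ 0 = 1) (hsum : Summable fun k : ℕ => a k * φ (lam * k)) :
    F φ lam = a 0 - Ainf φ lam := by
  rw [F, Ainf, hsum.tsum_eq_zero_add, sub_neg_eq_add]
  simp [hφ0]

theorem fourier_transform_of_Pinf_general (hint : Integrable φ) (hφ0 : φ 0 = 1) {lam : ℝ}
    (hsum : Summable fun k : ℕ => a k * φ (lam * k)) (w : ℝ) :
    FT (Pinf φ lam) w = 2 * FT φ w * ((H (lam * w) - F φ lam : ℝ) : ℂ) := by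
  rw [FT_Pinf hint, F_eq_sub_Ainf hφ0 hsum, sub_sub_eq_add_sub, add_comm (Ainf φ lam),
    sub_add_eq_add_sub]

end Pinf

theorem fourier_transform_of_Pinf
    (φ : ℝ → ℝ) (heven : ∀ x, φ (-x) = φ x) (hcont : Continuous φ)
    (hint : Integrable φ) (hφ0 : φ 0 = 1)
    (hFTreal : ∀ w : ℝ, (FT φ w).im = 0)
    (hFTnonneg : ∀ w : ℝ, 0 ≤ (FT φ w).re)
    (hFTint : Integrable (FT φ))
    (hFTanalytic : AnalyticOnNhd ℝ (fun w => (FT φ w).re) Set.univ)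
    (lam : ℝ) (hlam : 0 < lam) (w : ℝ) :
    FT (Pinf φ lam) w = 2 * FT φ w * ((H (lam * w) - F φ lam : ℝ) : ℂ) := by
  obtain ⟨C, hC⟩ := exists_abs_le_of_integrable_FT hcont hint hFTint
  exact fourier_transform_of_Pinf_general hint hφ0
    (summable_mul_of_abs_le summable_abs_a fun _ => hC _) w
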